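/- Let Φ be a positive linear map from n×n to m×m complex matrices, let f : ℝ → ℝ be operator monotone on [0,∞), and let A, B be positive definite n×n complex matrices with s·A ≤ B ≤ t·A for some scalars 0 < s ≤ t with s·t ≥ 1. Then (Φ(f(A)) + Φ(f(B)))/2 ≤ ((√s+√t)/2)·Φ(f(A ♯ B)). -/

import Mathlib

open Matrix ComplexOrder

/-- Loewner order: `A ≤ B` iff `B - A` is positive semidefinite. -/
def LoewnerLE {n : Type} [Fintype n] (A B : Matrix n n ℂ) : Prop := (B - A).PosSemidef

/-- The positive square root of a (Hermitian) matrix, via the continuous functional calculus. -/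
noncomputable def msqrt {n : Type} [Fintype n] [DecidableEq n] (A : Matrix n n ℂ) :
    Matrix n n ℂ := cfc Real.sqrt A

/-- The arithmetic mean `A ∇ B = (A + B)/2`. -/
noncomputable def amean {n : Type} [Fintype n] [DecidableEq n] (A B : Matrix n n ℂ) :
    Matrix n n ℂ := (2 : ℝ)⁻¹ • (A + B)

/-- The harmonic mean `A ! B = ((A⁻¹ + B⁻¹)/2)⁻¹`. -/
noncomputable def hmean {n : Type} [Fintype n] [DecidableEq n] (A B : Matrix n n ℂ) :
    Matrix n n ℂ := ((2 : ℝ)⁻¹ • (A⁻¹ + B⁻¹))⁻¹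

/-- The geometric mean `A ♯ B = A^(1/2) (A^(-1/2) B A^(-1/2))^(1/2) A^(1/2)`. -/
noncomputable def gmean {n : Type} [Fintype n] [DecidableEq n] (A B : Matrix n n ℂ) :
    Matrix n n ℂ := msqrt A * msqrt ((msqrt A)⁻¹ * B * (msqrt A)⁻¹) * msqrt A

/-- `f : ℝ → ℝ` is operator monotone on `[0,∞)`: it is continuous and nonnegative on `[0,∞)`
and monotone on positive-semidefinite complex matrices of every finite size, with `f` applied
via the continuous functional calculus. -/
def OpMonotone (f : ℝ → ℝ) : Prop :=
  ContinuousOn f (Set.Ici 0) ∧ (∀ x : ℝ, 0 ≤ x → 0 ≤ f x) ∧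
    ∀ (k : Type) [Fintype k] [DecidableEq k] (X Y : Matrix k k ℂ),
      X.PosSemidef → LoewnerLE X Y → LoewnerLE (cfc f X) (cfc f Y)

/-- `g : ℝ → ℝ` is operator monotone decreasing on `(0,∞)`: it is continuous and nonnegative on
`(0,∞)` and antitone on positive-definite complex matrices of every finite size, with `g` applied
via the continuous functional calculus. -/
def OpAntitone (g : ℝ → ℝ) : Prop :=
  ContinuousOn g (Set.Ioi 0) ∧ (∀ x : ℝ, 0 < x → 0 ≤ g x) ∧
    ∀ (k : Type) [Fintype k] [DecidableEq k] (X Y : Matrix k k ℂ),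
      X.PosDef → Y.PosDef → LoewnerLE X Y → LoewnerLE (cfc g Y) (cfc g X)

/-!
An operator monotone `f` on `[0, ∞)` is operator concave. To see this, conjugate `diag(A, B)` by a
block rotation with entries `a, b`, where `a² + b² = 1`: the upper left block of the result is
`M = a²A + b²B`. For every `ε > 0` the whole block matrix lies below `diag(M + ε, r)` once `r` is
large. Applying `f` and compressing to the first block gives
`a² f(A) + b² f(B) ≤ f(M + ε)`, and `ε → 0` gives concavity.

Put `c = (√s + √t) / 2`, so that `c ≥ √(st) ≥ 1`. Concavity and `f(0) ≥ 0` give `f(cG) ≤ c f(G)`.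
For `s ≤ x ≤ t`, expanding `(√x - √s)(√t - √x) ≥ 0` gives `(1 + x) / 2 ≤ c √x`, and evaluating this
at `A^(-1/2) B A^(-1/2)` gives `A ∇ B ≤ c (A ♯ B)`. Hence
`f(A) ∇ f(B) ≤ f(A ∇ B) ≤ f(c (A ♯ B)) ≤ c f(A ♯ B)`, to which `Φ` is applied.
-/

open scoped MatrixOrder

lemma aeval_fromBlocks_diagonal {R α n k : Type*} [CommSemiring R] [Semiring α] [Algebra R α]
    [Fintype n] [DecidableEq n] [Fintype k] [DecidableEq k] (p : Polynomial R)
    (A : Matrix n n α) (B : Matrix k k α) :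
    Polynomial.aeval (fromBlocks A 0 0 B) p =
      fromBlocks (Polynomial.aeval A p) 0 0 (Polynomial.aeval B p) := by
  induction p using Polynomial.induction_on' with
  | add p q hp hq => simp [hp, hq, fromBlocks_add]
  | monomial j c =>
    simp [Polynomial.aeval_monomial, Algebra.algebraMap_eq_smul_one, fromBlocks_diagonal_pow,
      fromBlocks_smul]

section Blocks

variable {𝕜 n k : Type*} [RCLike 𝕜]

lemma toBlocks₁₁_mono {M N : Matrix (n ⊕ k) (n ⊕ k) 𝕜} (h : M ≤ N) :
    M.toBlocks₁₁ ≤ N.toBlocks₁₁ :=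
  PosSemidef.submatrix h Sum.inl

lemma fromBlocks_diagonal_nonneg {A : Matrix n n 𝕜} {B : Matrix k k 𝕜}
    (hA : 0 ≤ A) (hB : 0 ≤ B) : 0 ≤ fromBlocks A 0 0 B := by
  rw [nonneg_iff_posSemidef] at hA hB ⊢
  refine ⟨hA.1.fromBlocks conjTranspose_zero hB.1, fun x => ?_⟩
  obtain ⟨⟨y, z⟩, rfl⟩ := Finsupp.sumFinsuppEquivProdFinsupp.symm.surjective x
  simpa [Finsupp.sum_sumElim, Function.comp_def] using add_nonneg (hA.2 y) (hB.2 z)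

lemma exists_fromBlocks_le_fromBlocks_diagonal [Finite n] [Finite k] [DecidableEq k]
    (M : Matrix n n 𝕜) (C : Matrix n k 𝕜) {N : Matrix k k 𝕜} (hN : IsSelfAdjoint N)
    {P : Matrix n n 𝕜} (hP : P.PosDef) :
    ∃ r : ℝ, fromBlocks M C Cᴴ N ≤ fromBlocks (M + P) 0 0 (r • 1) := by
  classical
  have := Fintype.ofFinite n
  have := Fintype.ofFinite k
  have := hP.isUnit.invertible
  -- `r • 1 - S` is the Schur complement of `P` in the difference of the two sides.
  let S := N + (-C)ᴴ * P⁻¹ * -C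
  have hS : IsSelfAdjoint S := hN.add (isHermitian_conjTranspose_mul_mul (-C) hP.inv.1)
  obtain ⟨r, hr⟩ := S.finite_real_spectrum.bddAbove
  have hSr : S ≤ r • 1 := by
    rw [← Algebra.algebraMap_eq_smul_one, le_algebraMap_iff_spectrum_le]
    exact fun x hx => hr hx
  have hsub : fromBlocks (M + P) 0 0 (r • 1) - fromBlocks M C Cᴴ N =
      fromBlocks P (-C) (-C)ᴴ (r • 1 - N) := by
    simp [sub_eq_add_neg, fromBlocks_neg, fromBlocks_add]
  refine ⟨r, ?_⟩
  rw [le_iff, hsub, hP.fromBlocks₁₁, sub_sub]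
  exact hSr

variable [Fintype n] [DecidableEq n] [Fintype k] [DecidableEq k]

lemma cfc_eq_aeval_interpolate (f : ℝ → ℝ) {A : Matrix n n 𝕜} (hA : IsSelfAdjoint A)
    {S : Finset ℝ} (hS : spectrum ℝ A ⊆ S) :
    cfc f A = Polynomial.aeval A (Lagrange.interpolate S id f) := by
  rw [← cfc_polynomial _ A hA]
  exact cfc_congr fun x hx =>
    (Lagrange.eval_interpolate_at_node f Function.injective_id.injOn (hS hx)).symm

lemma cfc_fromBlocks_diagonal (f : ℝ → ℝ) {A : Matrix n n 𝕜} {B : Matrix k k 𝕜}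
    (hA : IsSelfAdjoint A) (hB : IsSelfAdjoint B) :
    cfc f (fromBlocks A 0 0 B) = fromBlocks (cfc f A) 0 0 (cfc f B) := by
  have hD : IsSelfAdjoint (fromBlocks A 0 0 B) := IsHermitian.fromBlocks hA (by simp) hB
  let S := A.finite_real_spectrum.toFinset ∪ B.finite_real_spectrum.toFinset ∪
    (fromBlocks A 0 0 B).finite_real_spectrum.toFinset
  rw [cfc_eq_aeval_interpolate f hA (S := S) fun x hx => by simp [S, hx],
    cfc_eq_aeval_interpolate f hB (S := S) fun x hx => by simp [S, hx],
    cfc_eq_aeval_interpolate f hD (S := S) fun x hx => by simp [S, hx],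
    aeval_fromBlocks_diagonal]

end Blocks

section BlockRotation

variable {𝕜 n : Type*} [RCLike 𝕜] [DecidableEq n]

variable (𝕜 n) in
/-- The block rotation `[[a, b], [-b, a]]`, unitary when `a ^ 2 + b ^ 2 = 1`. -/
def blockRotation (a b : ℝ) : Matrix (n ⊕ n) (n ⊕ n) 𝕜 :=
  fromBlocks (a • 1) (b • 1) (-(b • 1)) (a • 1)

lemma star_blockRotation (a b : ℝ) :
    star (blockRotation 𝕜 n a b) = blockRotation 𝕜 n a (-b) := by
  simp [blockRotation, star_eq_conjTranspose, fromBlocks_conjTranspose]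

variable [Fintype n]

lemma blockRotation_mul_blockRotation_neg {a b : ℝ} (hab : a ^ 2 + b ^ 2 = 1) :
    blockRotation 𝕜 n a b * blockRotation 𝕜 n a (-b) = 1 := by
  have hab' : a * a + b * b = 1 := by linarith [sq a, sq b]
  simp [blockRotation, fromBlocks_multiply, smul_smul, ← add_smul, hab', mul_comm a b,
    add_comm (b * b), fromBlocks_one]

lemma blockRotation_mem_unitary {a b : ℝ} (hab : a ^ 2 + b ^ 2 = 1) :
    blockRotation 𝕜 n a b ∈ unitary (Matrix (n ⊕ n) (n ⊕ n) 𝕜) := by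
  have h := blockRotation_mul_blockRotation_neg (𝕜 := 𝕜) (n := n) hab
  rw [Unitary.mem_iff, star_blockRotation]
  exact ⟨mul_eq_one_comm.1 h, h⟩

lemma blockRotation_conj_fromBlocks_diagonal (a b : ℝ) (A B : Matrix n n 𝕜) :
    blockRotation 𝕜 n a b * fromBlocks A 0 0 B * star (blockRotation 𝕜 n a b) =
      fromBlocks (a ^ 2 • A + b ^ 2 • B) ((a * b) • (B - A))
        ((a * b) • (B - A)) (b ^ 2 • A + a ^ 2 • B) := by
  rw [star_blockRotation]
  simp only [blockRotation, fromBlocks_multiply]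
  congr 1 <;> simp [smul_smul, smul_sub] <;> module

end BlockRotation

lemma cfc_conj_of_mem_unitary {𝕜 n : Type*} [RCLike 𝕜] [Fintype n] [DecidableEq n] (f : ℝ → ℝ)
    {U A : Matrix n n 𝕜} (hU : U ∈ unitary (Matrix n n 𝕜)) (hA : IsSelfAdjoint A) :
    cfc f (U * A * star U) = U * cfc f A * star U :=
  (StarAlgHomClass.map_cfc (Unitary.conjStarAlgAut ℝ (Matrix n n 𝕜) ⟨U, hU⟩) f A
    (A.finite_real_spectrum.continuousOn f)
    (show Continuous fun X => U * X * star U by fun_prop) hA (hA.conjugate U)).symm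

section Limit

variable {A : Type*} [Ring A] [StarRing A] [TopologicalSpace A] [Algebra ℝ A] [PartialOrder A]
  [StarOrderedRing A] [ContinuousFunctionalCalculus ℝ A IsSelfAdjoint] [NonnegSpectrumClass ℝ A]

lemma le_of_forall_pos_le_add_algebraMap {a b : A}
    (h : ∀ δ : ℝ, 0 < δ → a ≤ b + algebraMap ℝ A δ) : a ≤ b := by
  have hlow (δ : ℝ) (hδ : 0 < δ) : algebraMap ℝ A (-δ) ≤ b - a := by
    rw [map_neg, neg_le_sub_iff_le_add]
    exact h δ hδ
  have hab : IsSelfAdjoint (b - a) := by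
    simpa using (IsSelfAdjoint.of_nonneg (sub_nonneg.2 (hlow 1 one_pos))).add
      (cfc_predicate_algebraMap (-1 : ℝ))
  rw [← sub_nonneg, ← map_zero (algebraMap ℝ A), algebraMap_le_iff_le_spectrum]
  refine fun x hx => le_of_forall_pos_le_add fun δ hδ => ?_
  linarith [(algebraMap_le_iff_le_spectrum hab).1 (hlow δ hδ) x hx]

variable [ContinuousMap.UniqueHom ℝ A]

open Filter Topology in
lemma exists_pos_cfc_add_algebraMap_le {f : ℝ → ℝ} (hf : ContinuousOn f (Set.Ici 0)) {a : A}
    (ha : 0 ≤ a) {δ : ℝ} (hδ : 0 < δ) :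
    ∃ ε : ℝ, 0 < ε ∧ cfc f (a + algebraMap ℝ A ε) ≤ cfc f a + algebraMap ℝ A δ := by
  have hspec {x : ℝ} (hx : x ∈ spectrum ℝ a) : 0 ≤ x := spectrum_nonneg_of_nonneg ha hx
  -- Continuity of `f` at `0` is one-sided, so the tube lemma is applied to an extension to `ℝ`.
  let g (x : ℝ) : ℝ := f (max x 0)
  have hg : Continuous g := hf.comp_continuous (by fun_prop) fun x => le_max_right x 0
  have hgf {x : ℝ} (hx : 0 ≤ x) : g x = f x := by simp only [g, max_eq_left hx]
  have hshift : ∀ᶠ ε in 𝓝 (0 : ℝ), ∀ x ∈ spectrum ℝ a, g (x + ε) < g x + δ := by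
    have hcompact : IsCompact (spectrum ℝ a) := ContinuousFunctionalCalculus.isCompact_spectrum a
    refine hcompact.eventually_forall_of_forall_eventually fun x _ => ?_
    exact (by fun_prop : Continuous fun y : ℝ × ℝ => g (y.2 + y.1)).continuousAt.eventually_lt
      (by fun_prop) (by simpa using hδ)
  obtain ⟨ε, hε, hε0⟩ :=
    ((hshift.filter_mono nhdsWithin_le_nhds).and (self_mem_nhdsWithin (s := Set.Ioi 0))).exists
  replace hε0 : 0 < ε := hε0
  have hfa : ContinuousOn f (spectrum ℝ a) := hf.mono fun x hx => hspec hx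
  have hfε : ContinuousOn f ((· + ε) '' spectrum ℝ a) := by
    refine hf.mono ?_
    rintro _ ⟨x, hx, rfl⟩
    exact add_nonneg (hspec hx) hε0.le
  have hfshift : ContinuousOn (fun x => f (x + ε)) (spectrum ℝ a) :=
    hfε.comp (by fun_prop) (Set.mapsTo_image _ _)
  have hcomp : cfc f (a + algebraMap ℝ A ε) = cfc (fun x => f (x + ε)) a := by
    rw [cfc_comp' f (· + ε) a, cfc_add_const ε (fun x => x) a, cfc_id' ℝ a]
  refine ⟨ε, hε0, ?_⟩
  rw [hcomp, ← cfc_add_const δ f a]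
  refine cfc_mono fun x hx => ?_
  have hlt := hε x hx
  rw [hgf (hspec hx), hgf (add_nonneg (hspec hx) hε0.le)] at hlt
  exact hlt.le

end Limit

namespace OpMonotone

variable {n : Type} [Fintype n] [DecidableEq n] {f : ℝ → ℝ}

lemma cfc_le_cfc (hf : OpMonotone f) {A B : Matrix n n ℂ} (hA : 0 ≤ A) (hAB : A ≤ B) :
    cfc f A ≤ cfc f B :=
  hf.2.2 n A B (nonneg_iff_posSemidef.1 hA) hAB

lemma cfc_nonneg (hf : OpMonotone f) {A : Matrix n n ℂ} (hA : 0 ≤ A) : 0 ≤ cfc f A :=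
  _root_.cfc_nonneg fun _ hx => hf.2.1 _ (spectrum_nonneg_of_nonneg hA hx)

lemma sq_smul_cfc_add_sq_smul_cfc_le (hf : OpMonotone f) {A B : Matrix n n ℂ} (hA : 0 ≤ A)
    (hB : 0 ≤ B) {a b : ℝ} (hab : a ^ 2 + b ^ 2 = 1) {ε : ℝ} (hε : 0 < ε) :
    a ^ 2 • cfc f A + b ^ 2 • cfc f B ≤
      cfc f (a ^ 2 • A + b ^ 2 • B + algebraMap ℝ (Matrix n n ℂ) ε) := by
  let U := blockRotation ℂ n a b
  let M := a ^ 2 • A + b ^ 2 • B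
  let C := (a * b) • (B - A)
  let N := b ^ 2 • A + a ^ 2 • B
  have hU : U ∈ unitary _ := blockRotation_mem_unitary hab
  have hD : 0 ≤ fromBlocks A 0 0 B := fromBlocks_diagonal_nonneg hA hB
  have hM : 0 ≤ M := add_nonneg (smul_nonneg (sq_nonneg a) hA) (smul_nonneg (sq_nonneg b) hB)
  have hN : 0 ≤ N := add_nonneg (smul_nonneg (sq_nonneg b) hA) (smul_nonneg (sq_nonneg a) hB)
  have hMε : 0 ≤ M + ε • 1 := add_nonneg hM (smul_nonneg hε.le zero_le_one)
  have hC : Cᴴ = C :=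
    (IsSelfAdjoint.all (a * b)).smul ((IsSelfAdjoint.of_nonneg hB).sub (.of_nonneg hA))
  have hconj : U * fromBlocks A 0 0 B * star U = fromBlocks M C Cᴴ N := by
    rw [hC]
    exact blockRotation_conj_fromBlocks_diagonal a b A B
  obtain ⟨r, hr⟩ :=
    exists_fromBlocks_le_fromBlocks_diagonal M C (.of_nonneg hN) (PosDef.one.smul hε)
  have hle : U * fromBlocks (cfc f A) 0 0 (cfc f B) * star U ≤
      fromBlocks (cfc f (M + ε • 1)) 0 0 (cfc f (r • 1)) := by
    rw [← cfc_fromBlocks_diagonal f (.of_nonneg hA) (.of_nonneg hB),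
      ← cfc_fromBlocks_diagonal f (.of_nonneg hMε) (.smul (.all r) (.one _)),
      ← cfc_conj_of_mem_unitary f hU (.of_nonneg hD)]
    exact hf.cfc_le_cfc (star_right_conjugate_nonneg hD U) (hconj.trans_le hr)
  rw [blockRotation_conj_fromBlocks_diagonal] at hle
  rw [Algebra.algebraMap_eq_smul_one]
  exact toBlocks₁₁_mono hle

theorem concaveOn_cfc (hf : OpMonotone f) :
    ConcaveOn ℝ (Set.Ici 0) fun A : Matrix n n ℂ => cfc f A := by
  refine ⟨convex_Ici 0, fun A hA B hB p q hp hq hpq => ?_⟩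
  simp only [Set.mem_Ici] at hA hB
  refine le_of_forall_pos_le_add_algebraMap fun δ hδ => ?_
  obtain ⟨ε, hε, hle⟩ := exists_pos_cfc_add_algebraMap_le hf.1
    (add_nonneg (smul_nonneg hp hA) (smul_nonneg hq hB)) hδ
  have hsq := hf.sq_smul_cfc_add_sq_smul_cfc_le hA hB (a := √p) (b := √q)
    (by rw [Real.sq_sqrt hp, Real.sq_sqrt hq, hpq]) hε
  rw [Real.sq_sqrt hp, Real.sq_sqrt hq] at hsq
  exact hsq.trans hle

lemma amean_cfc_le_cfc_amean (hf : OpMonotone f) {A B : Matrix n n ℂ} (hA : 0 ≤ A)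
    (hB : 0 ≤ B) : amean (cfc f A) (cfc f B) ≤ cfc f (amean A B) := by
  have h2 : (0 : ℝ) ≤ 2⁻¹ := by norm_num
  simpa only [amean, smul_add] using hf.concaveOn_cfc.2 hA hB h2 h2 (by norm_num)

lemma cfc_smul_le_smul_cfc (hf : OpMonotone f) {A : Matrix n n ℂ} (hA : 0 ≤ A) {c : ℝ}
    (hc : 1 ≤ c) : cfc f (c • A) ≤ c • cfc f A := by
  have hc0 : 0 < c := one_pos.trans_le hc
  have h0 : 0 ≤ 1 - c⁻¹ := sub_nonneg.2 (inv_le_one_of_one_le₀ hc)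
  have hcA : 0 ≤ c • A := smul_nonneg hc0.le hA
  have hf0 : 0 ≤ cfc f (0 : Matrix n n ℂ) := hf.cfc_nonneg le_rfl
  have hconc : c⁻¹ • cfc f (c • A) + (1 - c⁻¹) • cfc f 0 ≤ cfc f A := by
    simpa [hc0.ne'] using hf.concaveOn_cfc.2 hcA Set.self_mem_Ici
      (inv_nonneg.2 hc0.le) h0 (add_sub_cancel _ _)
  rw [← inv_smul_le_iff_of_pos hc0]
  exact (le_add_of_nonneg_right (smul_nonneg h0 hf0)).trans hconc

end OpMonotone

section RealSqrt

variable {s t : ℝ}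

lemma one_le_sqrt_mul_sqrt (hs : 0 ≤ s) (hst : 1 ≤ s * t) : 1 ≤ √s * √t := by
  rwa [← Real.sqrt_mul hs, Real.one_le_sqrt]

lemma one_le_sqrt_add_sqrt_div_two (hs : 0 ≤ s) (hst : 1 ≤ s * t) : 1 ≤ (√s + √t) / 2 := by
  nlinarith [one_le_sqrt_mul_sqrt hs hst, sq_nonneg (√s - √t), Real.sqrt_nonneg s,
    Real.sqrt_nonneg t]

lemma one_add_div_two_le_mul_sqrt (hs : 0 ≤ s) (hst : 1 ≤ s * t) {x : ℝ} (hsx : s ≤ x)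
    (hxt : x ≤ t) : 2⁻¹ * (1 + x) ≤ (√s + √t) / 2 * √x := by
  have hroots : 0 ≤ (√x - √s) * (√t - √x) :=
    mul_nonneg (sub_nonneg.2 (Real.sqrt_le_sqrt hsx)) (sub_nonneg.2 (Real.sqrt_le_sqrt hxt))
  linarith [one_le_sqrt_mul_sqrt hs hst, Real.mul_self_sqrt (hs.trans hsx)]

end RealSqrt

section GeometricMean

variable {n : Type} [Fintype n] [DecidableEq n] {A B : Matrix n n ℂ}

lemma msqrt_nonneg (A : Matrix n n ℂ) : 0 ≤ msqrt A :=
  cfc_nonneg fun x _ => Real.sqrt_nonneg x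

lemma msqrt_eq_cfcSqrt (hA : 0 ≤ A) : msqrt A = CFC.sqrt A := by
  rw [CFC.sqrt_eq_real_sqrt A hA, cfcₙ_eq_cfc, msqrt]

lemma gmean_nonneg (A B : Matrix n n ℂ) : 0 ≤ gmean A B :=
  conjugate_nonneg_of_nonneg (msqrt_nonneg ((msqrt A)⁻¹ * B * (msqrt A)⁻¹)) (msqrt_nonneg A)

lemma amean_one_le_smul_msqrt {X : Matrix n n ℂ} {s t : ℝ} (hs : 0 ≤ s) (hst : 1 ≤ s * t)
    (hsX : s • 1 ≤ X) (hXt : X ≤ t • 1) : amean 1 X ≤ ((√s + √t) / 2) • msqrt X := by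
  have hX : IsSelfAdjoint X := .of_nonneg ((smul_nonneg hs zero_le_one).trans hsX)
  rw [← Algebra.algebraMap_eq_smul_one] at hsX hXt
  have hle : cfc (fun x : ℝ => 2⁻¹ * (1 + x)) X ≤ cfc (fun x => (√s + √t) / 2 * √x) X :=
    cfc_mono fun x hx => one_add_div_two_le_mul_sqrt hs hst
      ((algebraMap_le_iff_le_spectrum hX).1 hsX x hx)
      ((le_algebraMap_iff_spectrum_le hX).1 hXt x hx)
  rw [cfc_const_mul _ _ X, cfc_const_mul _ _ X, cfc_const_add 1 _ X, cfc_id' ℝ X, map_one] at hle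
  exact hle

lemma amean_le_smul_gmean {s t : ℝ} (hs : 0 ≤ s) (hst : 1 ≤ s * t) (hA : A.PosDef)
    (hsA : s • A ≤ B) (hBt : B ≤ t • A) : amean A B ≤ ((√s + √t) / 2) • gmean A B := by
  have hA0 : 0 ≤ A := hA.posSemidef.nonneg
  let R := msqrt A
  let X := R⁻¹ * B * R⁻¹
  have hR : IsSelfAdjoint R := .of_nonneg (msqrt_nonneg A)
  have hRR : R * R = A := by
    simp only [R, msqrt_eq_cfcSqrt hA0, CFC.sqrt_mul_sqrt_self A]
  have hRinv : IsSelfAdjoint R⁻¹ := Matrix.IsHermitian.inv hR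
  have hRdet : IsUnit R.det := by
    rw [← isUnit_iff_isUnit_det]
    exact isUnit_of_mul_isUnit_left (hRR ▸ hA.isUnit)
  have hAX : R⁻¹ * A * R⁻¹ = 1 := by
    rw [← hRR, nonsing_inv_mul_cancel_left _ _ hRdet, mul_nonsing_inv _ hRdet]
  have hRX : R * X * R = B := by
    simp only [X, mul_assoc, nonsing_inv_mul _ hRdet, mul_one,
      mul_nonsing_inv_cancel_left _ _ hRdet]
  have hsX : s • 1 ≤ X := by
    simpa [hAX] using hRinv.conjugate_le_conjugate hsA
  have hXt : X ≤ t • 1 := by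
    simpa [hAX] using hRinv.conjugate_le_conjugate hBt
  calc amean A B = R * amean 1 X * R := by simp [amean, mul_add, add_mul, hRR, hRX]
    _ ≤ R * (((√s + √t) / 2) • msqrt X) * R :=
      hR.conjugate_le_conjugate (amean_one_le_smul_msqrt hs hst hsX hXt)
    _ = ((√s + √t) / 2) • gmean A B := by simp [gmean, R, X]

theorem OpMonotone.amean_cfc_le_smul_cfc_gmean {f : ℝ → ℝ} (hf : OpMonotone f) {s t : ℝ}
    (hs : 0 ≤ s) (hst : 1 ≤ s * t) (hA : A.PosDef) (hsA : s • A ≤ B) (hBt : B ≤ t • A) :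
    amean (cfc f A) (cfc f B) ≤ ((√s + √t) / 2) • cfc f (gmean A B) := by
  have hA0 : 0 ≤ A := hA.posSemidef.nonneg
  have hB0 : 0 ≤ B := (smul_nonneg hs hA0).trans hsA
  calc amean (cfc f A) (cfc f B) ≤ cfc f (amean A B) := hf.amean_cfc_le_cfc_amean hA0 hB0
    _ ≤ cfc f (((√s + √t) / 2) • gmean A B) :=
      hf.cfc_le_cfc (smul_nonneg (by norm_num) (add_nonneg hA0 hB0))
        (amean_le_smul_gmean hs hst hA hsA hBt)
    _ ≤ ((√s + √t) / 2) • cfc f (gmean A B) :=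
      hf.cfc_smul_le_smul_cfc (gmean_nonneg A B) (one_le_sqrt_add_sqrt_div_two hs hst)

end GeometricMean

theorem arith_le_geom_after_map {n m : Type} [Fintype n] [DecidableEq n] [Fintype m] [DecidableEq m]
    (Φ : Matrix n n ℂ →ₗ[ℂ] Matrix m m ℂ)
    (hΦ : ∀ X : Matrix n n ℂ, X.PosSemidef → (Φ X).PosSemidef)
    (f : ℝ → ℝ) (hf : OpMonotone f)
    (A B : Matrix n n ℂ) (hA : A.PosDef) (hB : B.PosDef)
    (s t : ℝ) (hs : 0 < s) (hst : s ≤ t) (h1 : 1 ≤ s * t)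
    (hsA : LoewnerLE (s • A) B) (htA : LoewnerLE B (t • A)) :
    LoewnerLE ((2 : ℝ)⁻¹ • (Φ (cfc f A) + Φ (cfc f B)))
      (((Real.sqrt s + Real.sqrt t) / 2) • Φ (cfc f (gmean A B))) := by
  have hle := hΦ _ (hf.amean_cfc_le_smul_cfc_gmean hs.le h1 hA hsA htA)
  rwa [amean, map_sub, Φ.map_smul_of_tower, Φ.map_smul_of_tower, map_add] at hle
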